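/- Let u ∈ W^{1,1}(Ω) for a bounded open set Ω ⊂ ℝ^N, let Φ ∈ C_c^∞(Ω × ℝ), θ ∈ L^∞(ℝ), and e a unit vector in ℝ^N. Then ∫_Ω θ(u(x)) Φ(x, u(x)) ∂_e u(x) dx = −∫_ℝ θ(t) (∫_{\{u ≥ t\}} ∂_e Φ(x,t) dx) dt, where ∂_e denotes the directional derivative in direction e. -/

import Mathlib

open MeasureTheory Set

/-! Friedrichs mollification gives the chain rule `∫ ∂ₜΨ(x, u) ∂ₑu dx = -∫ ∂ₑΨ(x, u) dx`, where the
derivatives of `Ψ` are evaluated on the graph of `u`. Applying it to the vertical translates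
`Ψ(x, t) = Φ(x, t + s)` and integrating over `s ≤ 0` recovers `∫ Φ(x, u) ∂ₑu dx` on the left by the
fundamental theorem of calculus, and produces the integral of `∂ₑΦ` over the subgraph `{t ≤ u}` on
the right. Replacing `Φ` by `η(t)Φ` gives the formula for smooth `η`; it extends to bounded
measurable `θ` because test functions are dense in `L¹` of the finite measure on `ℝ` that dominates
both sides. -/

open Filter Topology ContinuousLinearMap
open scoped ENNReal Convolution ContDiff

section Translation

variable {G F : Type*} [AddGroup G] [TopologicalSpace G] [IsTopologicalAddGroup G]
  [MeasurableSpace G] [BorelSpace G] {μ : Measure G} [IsLocallyFiniteMeasure μ]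
  [μ.InnerRegularCompactLTTop] [μ.IsAddRightInvariant] [NormedAddCommGroup F]

theorem tendsto_eLpNorm_comp_sub_right_sub {p : ℝ≥0∞} [Fact (1 ≤ p)] (hp : p ≠ ⊤) {f : G → F}
    (hf : MemLp f p μ) :
    Tendsto (fun y => eLpNorm (fun x => f (x - y) - f x) p μ) (𝓝 0) (𝓝 0) := by
  let T : G → C(G, G) := fun y => ⟨fun x => x - y, by fun_prop⟩
  have hT : Continuous T := ContinuousMap.continuous_of_continuous_uncurry _
    (by simp only [T, Function.uncurry_def, ContinuousMap.coe_mk]; fun_prop)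
  have hT_preserving (y : G) : MeasurePreserving (T y) μ μ := measurePreserving_sub_right μ y
  have hT_toLp (y : G) : Lp.compMeasurePreserving (T y) (hT_preserving y) (hf.toLp f)
      =ᵐ[μ] fun x => f (x - y) :=
    (Lp.coeFn_compMeasurePreserving _ (hT_preserving y)).trans
      ((hT_preserving y).quasiMeasurePreserving.ae_eq_comp hf.coeFn_toLp)
  have h_lim := ((continuous_const (y := hf.toLp f)).compMeasurePreservingLp hT hT_preserving
    hp).tendsto 0
  rw [tendsto_iff_edist_tendsto_0] at h_lim
  refine h_lim.congr fun y => ?_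
  rw [Lp.edist_def]
  refine eLpNorm_congr_ae ?_
  filter_upwards [hT_toLp y, hT_toLp 0] with x hxy hx0
  rw [Pi.sub_apply, hxy, hx0, sub_zero]

end Translation

section Mollification

theorem lintegral_enorm_convolution_sub_le {G F : Type*} [AddCommGroup G] [MeasurableSpace G]
    [MeasurableAdd₂ G] [MeasurableNeg G] {μ : Measure G} [SFinite μ] [μ.IsAddRightInvariant]
    [NormedAddCommGroup F] [NormedSpace ℝ F] [CompleteSpace F] {ρ : G → ℝ} (hρ_nonneg : 0 ≤ ρ)
    (hρ_one : ∫ y, ρ y ∂μ = 1) {f : G → F} (hf : Integrable f μ) {ε : ℝ≥0∞}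
    (hε : ∀ y ∈ Function.support ρ, ∫⁻ x, ‖f (x - y) - f x‖ₑ ∂μ ≤ ε) :
    ∫⁻ x, ‖(ρ ⋆[lsmul ℝ ℝ, μ] f) x - f x‖ₑ ∂μ ≤ ε := by
  have hρ : Integrable ρ μ := .of_integral_ne_zero (by simp [hρ_one])
  have hρ_lintegral : ∫⁻ y, ‖ρ y‖ₑ ∂μ = 1 := by
    rw [← ofReal_integral_norm_eq_lintegral_enorm hρ]
    simp only [Real.norm_of_nonneg (hρ_nonneg _), hρ_one, ENNReal.ofReal_one]
  have h_average : ∀ᵐ x ∂μ, (ρ ⋆[lsmul ℝ ℝ, μ] f) x - f x = ∫ y, ρ y • (f (x - y) - f x) ∂μ := by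
    filter_upwards [hρ.ae_convolution_exists (lsmul ℝ ℝ) hf] with x hx
    have h_integrable : Integrable (fun y => ρ y • f (x - y)) μ := hx
    simp only [smul_sub]
    rw [integral_sub h_integrable (hρ.smul_const _), integral_smul_const, hρ_one, one_smul]
    rfl
  have h_meas : AEMeasurable (fun p : G × G => ‖ρ p.2‖ₑ * ‖f (p.1 - p.2) - f p.1‖ₑ)
      (μ.prod μ) :=
    hρ.1.comp_snd.enorm.mul ((hf.1.comp_quasiMeasurePreserving
      (quasiMeasurePreserving_sub_of_right_invariant μ μ)).sub hf.1.comp_fst).enorm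
  calc ∫⁻ x, ‖(ρ ⋆[lsmul ℝ ℝ, μ] f) x - f x‖ₑ ∂μ
      ≤ ∫⁻ x, ∫⁻ y, ‖ρ y‖ₑ * ‖f (x - y) - f x‖ₑ ∂μ ∂μ := by
        refine lintegral_mono_ae ?_
        filter_upwards [h_average] with x hx
        rw [hx]
        exact (enorm_integral_le_lintegral_enorm _).trans_eq (by simp only [enorm_smul])
    _ = ∫⁻ y, ‖ρ y‖ₑ * ∫⁻ x, ‖f (x - y) - f x‖ₑ ∂μ ∂μ := by
        rw [lintegral_lintegral_swap h_meas]
        simp only [lintegral_const_mul' _ _ enorm_ne_top]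
    _ ≤ ∫⁻ y, ‖ρ y‖ₑ * ε ∂μ := by
        refine lintegral_mono fun y => ?_
        by_cases hy : y ∈ Function.support ρ
        · gcongr
          exact hε y hy
        · simp [Function.notMem_support.1 hy]
    _ = ε := by rw [lintegral_mul_const'' _ hρ.1.enorm, hρ_lintegral, one_mul]

theorem exists_seq_contDiffBump (E : Type*) [NormedAddCommGroup E] :
    ∃ φ : ℕ → ContDiffBump (0 : E), Tendsto (fun n => (φ n).rOut) atTop (𝓝 0) ∧
      ∀ n, (φ n).rOut ≤ 2 * (φ n).rIn := by
  have h_pos (n : ℕ) : 0 < 1 / ((n : ℝ) + 1) := by positivity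
  refine ⟨fun n => ⟨1 / ((n : ℝ) + 1), 2 * (1 / ((n : ℝ) + 1)), h_pos n, by linarith [h_pos n]⟩,
    ?_, fun n => le_rfl⟩
  simpa using (tendsto_one_div_add_atTop_nhds_zero_nat (𝕜 := ℝ)).const_mul 2

variable {E : Type*} [NormedAddCommGroup E] [NormedSpace ℝ E] [FiniteDimensional ℝ E]
  [MeasurableSpace E] [BorelSpace E] {μ : Measure E} [μ.IsAddHaarMeasure]

theorem tendsto_lintegral_enorm_normed_convolution_sub {F : Type*} [NormedAddCommGroup F]
    [NormedSpace ℝ F] [CompleteSpace F] {ι : Type*} {l : Filter ι} {φ : ι → ContDiffBump (0 : E)}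
    (hφ : Tendsto (fun i => (φ i).rOut) l (𝓝 0)) {f : E → F} (hf : Integrable f μ) :
    Tendsto (fun i => ∫⁻ x, ‖((φ i).normed μ ⋆[lsmul ℝ ℝ, μ] f) x - f x‖ₑ ∂μ) l (𝓝 0) := by
  have h_translate := tendsto_eLpNorm_comp_sub_right_sub ENNReal.one_ne_top
    (memLp_one_iff_integrable.2 hf)
  simp only [eLpNorm_one_eq_lintegral_enorm] at h_translate
  rw [ENNReal.tendsto_nhds_zero] at h_translate ⊢
  intro ε hε
  obtain ⟨δ, hδ, h_ball⟩ := Metric.eventually_nhds_iff_ball.1 (h_translate ε hε)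
  filter_upwards [hφ.eventually (gt_mem_nhds hδ)] with i hi
  refine lintegral_enorm_convolution_sub_le (φ i).nonneg_normed (φ i).integral_normed hf
    fun y hy => h_ball y ?_
  rw [(φ i).support_normed_eq] at hy
  exact Metric.ball_subset_ball hi.le hy

end Mollification

section WeakDerivative

variable {E : Type*} [NormedAddCommGroup E] [NormedSpace ℝ E] [MeasurableSpace E]

/-- `HasWeakLineDerivOn μ Ω u g e` says that `g` is the weak derivative `∂ₑu` on `Ω`, tested against
smooth functions compactly supported in `Ω`. Integrability of `u` and `g` is not part of the
definition. -/
def HasWeakLineDerivOn (μ : Measure E) (Ω : Set E) (u g : E → ℝ) (e : E) : Prop :=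
  ∀ φ : E → ℝ, ContDiff ℝ ∞ φ → HasCompactSupport φ → tsupport φ ⊆ Ω →
    ∫ x in Ω, u x * fderiv ℝ φ x e ∂μ = -∫ x in Ω, g x * φ x ∂μ

variable {Ω s K : Set E} {u g : E → ℝ} {e : E} {μ : Measure E}

theorem HasWeakLineDerivOn.integral_indicator_mul_fderiv (hug : HasWeakLineDerivOn μ Ω u g e)
    (hs : s ⊆ Ω) {φ : E → ℝ} (hφ : ContDiff ℝ ∞ φ) (hφ_supp : HasCompactSupport φ)
    (hφs : tsupport φ ⊆ s) :
    ∫ x, s.indicator u x * fderiv ℝ φ x e ∂μ = -∫ x, s.indicator g x * φ x ∂μ := by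
  have h_indicator {f ψ : E → ℝ} (hψ : ∀ x ∉ tsupport φ, ψ x = 0) :
      ∫ x, s.indicator f x * ψ x ∂μ = ∫ x in Ω, f x * ψ x ∂μ := by
    rw [setIntegral_eq_integral_of_forall_compl_eq_zero fun x hx => by
      rw [hψ x fun h => hx (hs (hφs h)), mul_zero]]
    congr 1 with x
    by_cases hx : x ∈ s
    · rw [indicator_of_mem hx]
    · rw [hψ x fun h => hx (hφs h), mul_zero, mul_zero]
  rw [h_indicator fun x hx => by rw [fderiv_of_notMem_tsupport ℝ hx, zero_apply],
    h_indicator fun x hx => image_eq_zero_of_notMem_tsupport hx]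
  exact hug φ hφ hφ_supp (hφs.trans hs)

theorem fderiv_comp_const_sub {E F : Type*} [NormedAddCommGroup E] [NormedSpace ℝ E]
    [NormedAddCommGroup F] [NormedSpace ℝ F] {f : E → F} {x t : E}
    (hf : DifferentiableAt ℝ f (x - t)) :
    fderiv ℝ (fun t => f (x - t)) t = -fderiv ℝ f (x - t) := by
  have h : HasFDerivAt (fun t => f (x - t)) (fderiv ℝ f (x - t) ∘L (-.id ℝ E)) t :=
    hf.hasFDerivAt.comp t ((hasFDerivAt_id t).const_sub x)
  rw [h.fderiv, comp_neg, comp_id]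

variable [FiniteDimensional ℝ E] [BorelSpace E] [μ.IsAddHaarMeasure]

theorem fderiv_convolution_apply {ρ f : E → ℝ} (hρ : ContDiff ℝ 1 ρ)
    (hρ_supp : HasCompactSupport ρ) (hf : LocallyIntegrable f μ) (x e : E) :
    fderiv ℝ (ρ ⋆[lsmul ℝ ℝ, μ] f) x e = -∫ t, f t * fderiv ℝ (fun t => ρ (x - t)) t e ∂μ := by
  let L : ℝ →L[ℝ] ℝ →L[ℝ] ℝ := lsmul ℝ ℝ
  have h_exists : ConvolutionExistsAt (fderiv ℝ ρ) f x (L.precompL E) μ :=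
    (hρ_supp.fderiv ℝ).convolutionExists_left (L.precompL E)
      (hρ.continuous_fderiv one_ne_zero) hf x
  rw [(hρ_supp.hasFDerivAt_convolution_left L hρ hf x).fderiv, convolution_eq_swap,
    integral_apply h_exists.integrable_swap, ← integral_neg]
  congr 1 with t
  rw [fderiv_comp_const_sub (hρ.differentiable one_ne_zero _), neg_apply, mul_neg, neg_neg]
  exact mul_comm _ _

theorem HasWeakLineDerivOn.fderiv_convolution_indicator (hug : HasWeakLineDerivOn μ Ω u g e)
    (hs : s ⊆ Ω) (hu : LocallyIntegrable (s.indicator u) μ) {ρ : E → ℝ} (hρ : ContDiff ℝ ∞ ρ)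
    (hρ_supp : HasCompactSupport ρ) {x : E} (hx : tsupport (fun t => ρ (x - t)) ⊆ s) :
    fderiv ℝ (ρ ⋆[lsmul ℝ ℝ, μ] s.indicator u) x e = (ρ ⋆[lsmul ℝ ℝ, μ] s.indicator g) x := by
  rw [fderiv_convolution_apply (hρ.of_le (by exact_mod_cast le_top)) hρ_supp hu,
    hug.integral_indicator_mul_fderiv hs (φ := fun t => ρ (x - t)) (by fun_prop)
      (hρ_supp.comp_homeomorph (Homeomorph.subLeft x)) hx, neg_neg, convolution_eq_swap]
  simp only [lsmul_apply, smul_eq_mul, mul_comm]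

theorem tsupport_normed_comp_sub_subset (φ : ContDiffBump (0 : E)) (x : E) :
    tsupport (fun t => φ.normed μ (x - t)) ⊆ Metric.closedBall x φ.rOut := by
  refine closure_minimal (fun t ht => ?_) Metric.isClosed_closedBall
  have h_mem : x - t ∈ Function.support (φ.normed μ) := ht
  rw [φ.support_normed_eq, mem_ball_zero_iff, ← dist_eq_norm] at h_mem
  exact Metric.mem_closedBall'.2 h_mem.le

theorem HasWeakLineDerivOn.exists_seq_contDiff_tendsto (hug : HasWeakLineDerivOn μ Ω u g e)
    (hΩ : IsOpen Ω) (hu : LocallyIntegrableOn u Ω μ) (hg : LocallyIntegrableOn g Ω μ)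
    (hK : IsCompact K) (hKΩ : K ⊆ Ω) :
    ∃ v : ℕ → E → ℝ, (∀ n, ContDiff ℝ ∞ (v n)) ∧
      (∀ᵐ x ∂μ.restrict K, Tendsto (fun n => v n x) atTop (𝓝 (u x))) ∧
      Tendsto (fun n => ∫⁻ x in K, ‖fderiv ℝ (v n) x e - g x‖ₑ ∂μ) atTop (𝓝 0) := by
  obtain ⟨δ, hδ, hδΩ⟩ := hK.exists_cthickening_subset_open hΩ hKΩ
  set L : Set E := Metric.cthickening δ K
  have hL : IsCompact L := hK.cthickening
  have hKL : K ⊆ L := Metric.self_subset_cthickening K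
  have h_integrable {f : E → ℝ} (hf : LocallyIntegrableOn f Ω μ) : Integrable (L.indicator f) μ :=
    (hf.integrableOn_compact_subset hδΩ hL).integrable_indicator hL.measurableSet
  have hu_loc : LocallyIntegrable (L.indicator u) μ := (h_integrable hu).locallyIntegrable
  obtain ⟨φ, hφ, hφ_ratio⟩ := exists_seq_contDiffBump E
  refine ⟨fun n => (φ n).normed μ ⋆[lsmul ℝ ℝ, μ] L.indicator u, fun n =>
    (φ n).hasCompactSupport_normed.contDiff_convolution_left _ (φ n).contDiff_normed hu_loc, ?_, ?_⟩
  · rw [ae_restrict_iff' hK.measurableSet]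
    filter_upwards [ContDiffBump.ae_convolution_tendsto_right_of_locallyIntegrable hφ
      (.of_forall hφ_ratio) hu_loc] with x hx hxK
    simpa only [indicator_of_mem (hKL hxK)] using hx
  · refine tendsto_of_tendsto_of_tendsto_of_le_of_le' tendsto_const_nhds
      (tendsto_lintegral_enorm_normed_convolution_sub hφ (h_integrable hg))
      (.of_forall fun _ => zero_le) ?_
    filter_upwards [hφ.eventually (gt_mem_nhds hδ)] with n hn
    refine (setLIntegral_congr_fun hK.measurableSet fun x hx => ?_).trans_le
      (setLIntegral_le_lintegral K _)
    rw [hug.fderiv_convolution_indicator hδΩ hu_loc (φ n).contDiff_normed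
      (φ n).hasCompactSupport_normed, indicator_of_mem (hKL hx)]
    exact (tsupport_normed_comp_sub_subset (φ n) x).trans
      ((Metric.closedBall_subset_closedBall hn.le).trans
        (Metric.closedBall_subset_cthickening hx δ))

end WeakDerivative

section Limits

theorem tendsto_integral_smul_of_tendsto_lintegral_enorm_sub {α ι 𝕜 F : Type*}
    [MeasurableSpace α] {μ : Measure α} [NormedField 𝕜] [NormedAddCommGroup F] [NormedSpace ℝ F]
    [NormedSpace 𝕜 F] {l : Filter ι} [l.IsCountablyGenerated] {a : ι → α → 𝕜} {a₀ : α → 𝕜}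
    {w : ι → α → F} {w₀ : α → F} {C : ℝ} (ha : ∀ i, AEStronglyMeasurable (a i) μ)
    (haC : ∀ i x, ‖a i x‖ ≤ C) (h_lim : ∀ᵐ x ∂μ, Tendsto (fun i => a i x) l (𝓝 (a₀ x)))
    (hw : ∀ i, Integrable (w i) μ) (hw₀ : Integrable w₀ μ)
    (hw_lim : Tendsto (fun i => ∫⁻ x, ‖w i x - w₀ x‖ₑ ∂μ) l (𝓝 0)) :
    Tendsto (fun i => ∫ x, a i x • w i x ∂μ) l (𝓝 (∫ x, a₀ x • w₀ x ∂μ)) := by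
  have h_dominated : Tendsto (fun i => ∫ x, a i x • w₀ x ∂μ) l (𝓝 (∫ x, a₀ x • w₀ x ∂μ)) := by
    refine tendsto_integral_filter_of_dominated_convergence (fun x => C * ‖w₀ x‖)
      (.of_forall fun i => (ha i).smul hw₀.1) (.of_forall fun i => .of_forall fun x => ?_)
      (hw₀.norm.const_mul C) (h_lim.mono fun x hx => hx.smul_const (w₀ x))
    rw [norm_smul]
    gcongr
    exact haC i x
  have h_integrable (i : ι) {w' : α → F} (hw' : Integrable w' μ) :
      Integrable (fun x => a i x • w' x) μ :=
    hw'.bdd_smul C (ha i) (.of_forall (haC i))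
  have h_error : Tendsto (fun i => ∫ x, a i x • (w i x - w₀ x) ∂μ) l (𝓝 0) := by
    have h_bound := ENNReal.Tendsto.const_mul (a := ENNReal.ofReal C) hw_lim
      (.inr ENNReal.ofReal_ne_top)
    rw [mul_zero] at h_bound
    rw [tendsto_zero_iff_enorm_tendsto_zero]
    refine tendsto_of_tendsto_of_tendsto_of_le_of_le tendsto_const_nhds h_bound
      (fun _ => zero_le) fun i => (enorm_integral_le_lintegral_enorm _).trans ?_
    rw [← lintegral_const_mul' _ _ ENNReal.ofReal_ne_top]
    refine lintegral_mono fun x => ?_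
    rw [enorm_smul, ← ofReal_norm (a i x)]
    gcongr
    exact haC i x
  rw [← zero_add (∫ x, a₀ x • w₀ x ∂μ)]
  refine (h_error.add h_dominated).congr fun i => ?_
  simp only [smul_sub]
  rw [integral_sub (h_integrable i (hw i)) (h_integrable i hw₀), sub_add_cancel]

end Limits

section ChainRule

theorem hasCompactSupport_comp_graph {X Y Z : Type*} [TopologicalSpace X] [R1Space X]
    [TopologicalSpace Y] [Zero Z] {F : X × Y → Z} (hF : HasCompactSupport F) (v : X → Y) :
    HasCompactSupport fun x => F (x, v x) :=
  .intro (hF.isCompact.image continuous_fst) fun _ hx =>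
    image_eq_zero_of_notMem_tsupport fun h => hx ⟨_, h, rfl⟩

theorem fderiv_comp_graph {E F G : Type*} [NormedAddCommGroup E] [NormedSpace ℝ E]
    [NormedAddCommGroup F] [NormedSpace ℝ F] [NormedAddCommGroup G] [NormedSpace ℝ G]
    {Ψ : E × F → G} {v : E → F} {x : E} (hΨ : DifferentiableAt ℝ Ψ (x, v x))
    (hv : DifferentiableAt ℝ v x) (e : E) :
    fderiv ℝ (fun x => Ψ (x, v x)) x e = fderiv ℝ Ψ (x, v x) (e, fderiv ℝ v x e) := by
  have h : HasFDerivAt (fun x => Ψ (x, v x)) _ x :=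
    hΨ.hasFDerivAt.comp x ((hasFDerivAt_id x).prodMk hv.hasFDerivAt)
  rw [h.fderiv]
  rfl

variable {E : Type*} [NormedAddCommGroup E] [NormedSpace ℝ E] {Ψ : E × ℝ → ℝ} {u g : E → ℝ}
  {e : E}

theorem fderiv_apply_eq_add_mul (p : E × ℝ) (e : E) (r : ℝ) :
    fderiv ℝ Ψ p (e, r) = fderiv ℝ Ψ p (e, 0) + fderiv ℝ Ψ p (0, 1) * r := by
  rw [mul_comm, ← smul_eq_mul, ← map_smul, ← map_add]
  simp

variable [FiniteDimensional ℝ E] [MeasurableSpace E] [BorelSpace E] {μ : Measure E}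
  [μ.IsAddHaarMeasure]

theorem integral_fderiv_apply_eq_zero {w : E → ℝ} (hw : ContDiff ℝ 1 w)
    (hw_supp : HasCompactSupport w) (e : E) : ∫ x, fderiv ℝ w x e ∂μ = 0 := by
  have h_integrable : Integrable (fun x => fderiv ℝ w x e) μ :=
    ((hw.continuous_fderiv one_ne_zero).clm_apply continuous_const).integrable_of_hasCompactSupport
      (hw_supp.fderiv_apply ℝ e)
  simpa using integral_mul_fderiv_eq_neg_fderiv_mul_of_integrable (μ := μ)
    (f := fun _ : E => (1 : ℝ)) (g := w) (v := e) (by simp) (by simpa using h_integrable)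
    (by simpa using hw.continuous.integrable_of_hasCompactSupport hw_supp)
    (fun _ _ => differentiableAt_const _) (fun x _ => hw.differentiable one_ne_zero x)

theorem integral_fderiv_comp_graph_mul_fderiv (hΨ : ContDiff ℝ 1 Ψ)
    (hΨ_supp : HasCompactSupport Ψ) {v : E → ℝ} (hv : ContDiff ℝ 1 v) (e : E) :
    ∫ x, fderiv ℝ Ψ (x, v x) (0, 1) * fderiv ℝ v x e ∂μ =
      -∫ x, fderiv ℝ Ψ (x, v x) (e, 0) ∂μ := by
  have h_continuous (d : E × ℝ) : Continuous fun x => fderiv ℝ Ψ (x, v x) d :=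
    ((hΨ.continuous_fderiv one_ne_zero).comp (continuous_id.prodMk hv.continuous)).clm_apply
      continuous_const
  have h_supp (d : E × ℝ) : HasCompactSupport fun x => fderiv ℝ Ψ (x, v x) d :=
    hasCompactSupport_comp_graph (hΨ_supp.fderiv_apply ℝ d) v
  have h_vertical : Integrable (fun x => fderiv ℝ Ψ (x, v x) (0, 1) * fderiv ℝ v x e) μ :=
    ((h_continuous _).mul ((hv.continuous_fderiv one_ne_zero).clm_apply
      continuous_const)).integrable_of_hasCompactSupport (h_supp _).mul_right
  have h_total := integral_fderiv_apply_eq_zero (μ := μ) (hΨ.comp (contDiff_id.prodMk hv))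
    (hasCompactSupport_comp_graph hΨ_supp v) e
  have h_chain (x : E) : fderiv ℝ (fun x => Ψ (x, v x)) x e =
      fderiv ℝ Ψ (x, v x) (e, 0) + fderiv ℝ Ψ (x, v x) (0, 1) * fderiv ℝ v x e := by
    rw [fderiv_comp_graph (hΨ.differentiable one_ne_zero _) (hv.differentiable one_ne_zero _),
      fderiv_apply_eq_add_mul]
  simp only [Function.comp_def, id, h_chain] at h_total
  rw [integral_add ((h_continuous _).integrable_of_hasCompactSupport (h_supp _)) h_vertical]
    at h_total
  exact eq_neg_of_add_eq_zero_right h_total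

theorem HasWeakLineDerivOn.setIntegral_fderiv_comp_graph_mul {Ω K : Set E}
    (hug : HasWeakLineDerivOn μ Ω u g e) (hΩ : IsOpen Ω) (hu : LocallyIntegrableOn u Ω μ)
    (hg : LocallyIntegrableOn g Ω μ) (hK : IsCompact K) (hKΩ : K ⊆ Ω) (hΨ : ContDiff ℝ 1 Ψ)
    (hΨ_supp : HasCompactSupport Ψ) (hΨK : tsupport Ψ ⊆ K ×ˢ univ) :
    ∫ x in K, fderiv ℝ Ψ (x, u x) (0, 1) * g x ∂μ =
      -∫ x in K, fderiv ℝ Ψ (x, u x) (e, 0) ∂μ := by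
  have : IsFiniteMeasure (μ.restrict K) := isFiniteMeasure_restrict.2 hK.measure_ne_top
  have hΨ' (d : E × ℝ) : Continuous fun p => fderiv ℝ Ψ p d :=
    (hΨ.continuous_fderiv one_ne_zero).clm_apply continuous_const
  have h_outside (d : E × ℝ) {x : E} (hx : x ∉ K) (t : ℝ) : fderiv ℝ Ψ (x, t) d = 0 := by
    rw [fderiv_of_notMem_tsupport ℝ fun h => hx (hΨK h).1, zero_apply]
  obtain ⟨v, hv, hv_lim, hv'_lim⟩ := hug.exists_seq_contDiff_tendsto hΩ hu hg hK hKΩ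
  have hv_one (n : ℕ) : ContDiff ℝ 1 (v n) := (hv n).of_le (by exact_mod_cast le_top)
  have h_limit (d : E × ℝ) {w : ℕ → E → ℝ} {w₀ : E → ℝ} (hw : ∀ n, IntegrableOn (w n) K μ)
      (hw₀ : IntegrableOn w₀ K μ)
      (hw_lim : Tendsto (fun n => ∫⁻ x in K, ‖w n x - w₀ x‖ₑ ∂μ) atTop (𝓝 0)) :
      Tendsto (fun n => ∫ x in K, fderiv ℝ Ψ (x, v n x) d * w n x ∂μ) atTop
        (𝓝 (∫ x in K, fderiv ℝ Ψ (x, u x) d * w₀ x ∂μ)) := by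
    obtain ⟨C, hC⟩ := (hΨ_supp.fderiv_apply ℝ d).exists_bound_of_continuous (hΨ' d)
    refine tendsto_integral_smul_of_tendsto_lintegral_enorm_sub
      (fun n => ((hΨ' d).comp (continuous_id.prodMk (hv n).continuous)).aestronglyMeasurable)
      (fun n x => hC _) ?_ hw hw₀ hw_lim
    filter_upwards [hv_lim] with x hx
    exact ((hΨ' d).tendsto (x, u x)).comp (tendsto_const_nhds.prodMk_nhds hx)
  have h_vertical := h_limit (0, 1) (fun n => (((hv_one n).continuous_fderiv one_ne_zero).clm_apply
    continuous_const).continuousOn.integrableOn_compact hK)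
    (hg.integrableOn_compact_subset hKΩ hK) hv'_lim
  have h_horizontal := h_limit (e, 0) (fun _ => integrable_const (1 : ℝ)) (integrable_const 1)
    (by simp)
  simp only [mul_one] at h_horizontal
  refine tendsto_nhds_unique h_vertical (h_horizontal.neg.congr fun n => ?_)
  rw [setIntegral_eq_integral_of_forall_compl_eq_zero fun x hx => h_outside _ hx _,
    setIntegral_eq_integral_of_forall_compl_eq_zero fun x hx => by rw [h_outside _ hx, zero_mul],
    integral_fderiv_comp_graph_mul_fderiv hΨ hΨ_supp (hv_one n)]

end ChainRule

section Subgraph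

variable {α F : Type*} [MeasurableSpace α] {ν : Measure α} {u : α → ℝ} [NormedAddCommGroup F]

theorem nullMeasurableSet_subgraph (hu : AEMeasurable u ν) :
    NullMeasurableSet {p : α × ℝ | p.2 ≤ u p.1} (ν.prod volume) :=
  nullMeasurableSet_le measurable_snd.aemeasurable hu.comp_fst

variable [SFinite ν]

theorem measurePreserving_shear (hu : Measurable u) :
    MeasurePreserving (fun p : α × ℝ => (p.1, u p.1 + p.2)) (ν.prod volume) (ν.prod volume) :=
  (MeasurePreserving.id ν).skew_product (g := fun x s => u x + s) (by fun_prop)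
    (.of_forall fun x => (measurePreserving_add_left volume (u x)).map_eq)

theorem integrable_comp_shear (hu : AEMeasurable u ν) {q : α × ℝ → F}
    (hq : Integrable q (ν.prod volume)) :
    Integrable (fun p : α × ℝ => q (p.1, u p.1 + p.2)) (ν.prod volume) := by
  refine ((measurePreserving_shear hu.measurable_mk).integrable_comp_of_integrable hq).congr ?_
  filter_upwards [Measure.quasiMeasurePreserving_fst.ae hu.ae_eq_mk] with p hp
  rw [Function.comp_apply, hp]

variable [NormedSpace ℝ F]

theorem setIntegral_subgraph (hu : AEMeasurable u ν) {q : α × ℝ → F}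
    (hq : Integrable q (ν.prod volume)) :
    ∫ p in {p : α × ℝ | p.2 ≤ u p.1}, q p ∂(ν.prod volume) =
      ∫ x, (∫ t in Iic (u x), q (x, t)) ∂ν := by
  have hS := nullMeasurableSet_subgraph hu
  rw [← integral_indicator₀ hS, integral_prod _ (hq.indicator₀ hS)]
  simp only [← integral_indicator measurableSet_Iic]
  rfl

theorem setIntegral_subgraph_symm (hu : AEMeasurable u ν) {q : α × ℝ → F}
    (hq : Integrable q (ν.prod volume)) :
    ∫ p in {p : α × ℝ | p.2 ≤ u p.1}, q p ∂(ν.prod volume) =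
      ∫ t, ∫ x in {x | t ≤ u x}, q (x, t) ∂ν := by
  have hS := nullMeasurableSet_subgraph hu
  rw [← integral_indicator₀ hS, integral_prod_symm _ (hq.indicator₀ hS)]
  simp only [← integral_indicator₀ (nullMeasurableSet_le aemeasurable_const hu)]
  rfl

theorem setIntegral_Iic_comp_add_left (f : ℝ → F) (a : ℝ) :
    ∫ s in Iic 0, f (a + s) = ∫ t in Iic a, f t := by
  simpa using (measurePreserving_add_left volume a).setIntegral_preimage_emb
    (measurableEmbedding_addLeft a) f (Iic a)

theorem integral_Iic_integral_comp_shear (hu : AEMeasurable u ν) {q : α × ℝ → F}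
    (hq : Integrable q (ν.prod volume)) :
    ∫ s in Iic (0 : ℝ), ∫ x, q (x, u x + s) ∂ν =
      ∫ p in {p : α × ℝ | p.2 ≤ u p.1}, q p ∂(ν.prod volume) := by
  have h_integrable : Integrable (fun p : α × ℝ => q (p.1, u p.1 + p.2))
      (ν.prod (volume.restrict (Iic 0))) :=
    (integrable_comp_shear hu hq).mono_measure
      (Measure.prod_mono le_rfl Measure.restrict_le_self)
  rw [setIntegral_subgraph hu hq, ← integral_integral_swap h_integrable]
  congr 1 with x
  exact setIntegral_Iic_comp_add_left (fun t => q (x, t)) (u x)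

end Subgraph

section LayerCake

theorem setIntegral_Iic_fderiv_snd {E : Type*} [NormedAddCommGroup E] [NormedSpace ℝ E]
    {Φ : E × ℝ → ℝ} (hΦ : ContDiff ℝ 1 Φ) (hΦ_supp : HasCompactSupport Φ) (x : E) (a : ℝ) :
    ∫ t in Iic a, fderiv ℝ Φ (x, t) (0, 1) = Φ (x, a) := by
  have h_deriv (t : ℝ) : HasDerivAt (fun t => Φ (x, t)) (fderiv ℝ Φ (x, t) (0, 1)) t :=
    (hΦ.differentiable one_ne_zero (x, t)).hasFDerivAt.comp_hasDerivAt t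
      ((hasDerivAt_const t x).prodMk (hasDerivAt_id t))
  have h_supp : HasCompactSupport fun t => Φ (x, t) :=
    .intro (hΦ_supp.isCompact.image continuous_snd) fun _ ht =>
      image_eq_zero_of_notMem_tsupport fun h => ht ⟨_, h, rfl⟩
  have h_contDiff : ContDiff ℝ 1 fun t => Φ (x, t) := hΦ.comp (contDiff_const.prodMk contDiff_id)
  simpa only [(h_deriv _).deriv] using h_supp.integral_Iic_deriv_eq h_contDiff a

theorem integrable_mul_comp_fst_of_hasCompactSupport {X Y : Type*} [TopologicalSpace X]
    [MeasurableSpace X] [OpensMeasurableSpace X] [TopologicalSpace Y] [MeasurableSpace Y]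
    [OpensMeasurableSpace Y] [T2Space Y] [SecondCountableTopologyEither X Y] {μ : Measure X}
    {ν : Measure Y} [IsFiniteMeasureOnCompacts ν] {q : X × Y → ℝ} (hq : Continuous q)
    (hq_supp : HasCompactSupport q) {g : X → ℝ} (hg : Integrable g μ) :
    Integrable (fun p : X × Y => q p * g p.1) (μ.prod ν) := by
  obtain ⟨C, hC⟩ := hq_supp.exists_bound_of_continuous hq
  have hJ : IsCompact (Prod.snd '' tsupport q) := hq_supp.isCompact.image continuous_snd
  have h_strip : Integrable (fun y => (Prod.snd '' tsupport q).indicator (1 : Y → ℝ) y) ν :=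
    (integrable_indicator_iff hJ.measurableSet).2 (integrableOn_const hJ.measure_lt_top.ne)
  refine ((hg.mul_prod h_strip).bdd_mul hq.aestronglyMeasurable (.of_forall hC)).congr
    (.of_forall fun p => ?_)
  by_cases hp : p ∈ tsupport q
  · simp [mem_image_of_mem Prod.snd hp]
  · simp [image_eq_zero_of_notMem_tsupport hp]



variable {E : Type*} [NormedAddCommGroup E] [NormedSpace ℝ E] [FiniteDimensional ℝ E]
  [MeasurableSpace E] [BorelSpace E] {μ : Measure E} [μ.IsAddHaarMeasure] {Ω K : Set E}
  {u g : E → ℝ} {e : E}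

theorem HasWeakLineDerivOn.setIntegral_comp_graph_mul (hug : HasWeakLineDerivOn μ Ω u g e)
    (hΩ : IsOpen Ω) (hu : LocallyIntegrableOn u Ω μ) (hg : LocallyIntegrableOn g Ω μ)
    (hK : IsCompact K) (hKΩ : K ⊆ Ω) {Φ : E × ℝ → ℝ} (hΦ : ContDiff ℝ 1 Φ)
    (hΦ_supp : HasCompactSupport Φ) (hΦK : tsupport Φ ⊆ K ×ˢ univ) :
    ∫ x in K, Φ (x, u x) * g x ∂μ =
      -∫ p in {p : E × ℝ | p.2 ≤ u p.1}, fderiv ℝ Φ p (e, 0) ∂((μ.restrict K).prod volume) := by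
  have : IsFiniteMeasure (μ.restrict K) := isFiniteMeasure_restrict.2 hK.measure_ne_top
  have hu_meas : AEMeasurable u (μ.restrict K) :=
    (hu.integrableOn_compact_subset hKΩ hK).aemeasurable
  have hg_K : Integrable g (μ.restrict K) := hg.integrableOn_compact_subset hKΩ hK
  have hΦ' (d : E × ℝ) : Continuous fun p => fderiv ℝ Φ p d :=
    (hΦ.continuous_fderiv one_ne_zero).clm_apply continuous_const
  have h_vertical : Integrable (fun p : E × ℝ => fderiv ℝ Φ (p.1, u p.1 + p.2) (0, 1) * g p.1)
      ((μ.restrict K).prod (volume.restrict (Iic 0))) :=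
    (integrable_comp_shear hu_meas (integrable_mul_comp_fst_of_hasCompactSupport (hΦ' _)
      (hΦ_supp.fderiv_apply ℝ _) hg_K)).mono_measure
      (Measure.prod_mono le_rfl Measure.restrict_le_self)
  have h_horizontal : Integrable (fun p => fderiv ℝ Φ p (e, 0)) ((μ.restrict K).prod volume) :=
    (hΦ' _).integrable_of_hasCompactSupport (hΦ_supp.fderiv_apply ℝ _)
  have h_translate (s : ℝ) : ∫ x in K, fderiv ℝ Φ (x, u x + s) (0, 1) * g x ∂μ =
      -∫ x in K, fderiv ℝ Φ (x, u x + s) (e, 0) ∂μ := by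
    let τ : E × ℝ ≃ₜ E × ℝ := Homeomorph.addRight (0, s)
    have h_supp : tsupport (fun p => Φ (p + (0, s))) ⊆ K ×ˢ univ := fun p hp => by
      have hp' : p + (0, s) ∈ tsupport Φ := (tsupport_comp_eq_preimage Φ τ).le hp
      simpa using hΦK hp'
    simpa only [fderiv_comp_add_right, Prod.mk_add_mk, add_zero] using
      hug.setIntegral_fderiv_comp_graph_mul hΩ hu hg hK hKΩ (Ψ := fun p => Φ (p + (0, s)))
        (hΦ.comp (contDiff_id.add contDiff_const)) (hΦ_supp.comp_homeomorph τ) h_supp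
  calc ∫ x in K, Φ (x, u x) * g x ∂μ
      = ∫ x in K, (∫ s in Iic (0 : ℝ), fderiv ℝ Φ (x, u x + s) (0, 1) * g x) ∂μ := by
        congr 1 with x
        rw [integral_mul_const, setIntegral_Iic_comp_add_left (fun t => fderiv ℝ Φ (x, t) (0, 1)),
          setIntegral_Iic_fderiv_snd hΦ hΦ_supp]
    _ = ∫ s in Iic (0 : ℝ), ∫ x in K, fderiv ℝ Φ (x, u x + s) (0, 1) * g x ∂μ :=
        integral_integral_swap h_vertical
    _ = -∫ s in Iic (0 : ℝ), ∫ x in K, fderiv ℝ Φ (x, u x + s) (e, 0) ∂μ := by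
        simp only [h_translate, integral_neg]
    _ = _ := by rw [integral_Iic_integral_comp_shear hu_meas h_horizontal]

end LayerCake

section Density

variable {α β V F : Type*} [MeasurableSpace α] [MeasurableSpace β] {μ : Measure α} {ν : Measure β}
  [NormedAddCommGroup F] [NormedSpace ℝ F] [MeasurableSpace V] {a : α → V} {b : β → V}
  {h : α → F} {k : β → F} {θ η : V → ℝ}

theorem integrable_comp_smul_of_bounded (ha : AEMeasurable a μ) (hh : Integrable h μ)
    (hθ : Measurable θ) (hθ_bdd : ∃ C, ∀ t, |θ t| ≤ C) :
    Integrable (fun x => θ (a x) • h x) μ := by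
  obtain ⟨C, hC⟩ := hθ_bdd
  exact hh.bdd_smul C (hθ.comp_aemeasurable ha).aestronglyMeasurable (.of_forall fun x => hC (a x))

theorem enorm_integral_comp_smul_sub_le (ha : AEMeasurable a μ) (hh : Integrable h μ)
    (hθ : Measurable θ) (hθ_bdd : ∃ C, ∀ t, |θ t| ≤ C) (hη : Measurable η)
    (hη_bdd : ∃ C, ∀ t, |η t| ≤ C) :
    ‖∫ x, θ (a x) • h x ∂μ - ∫ x, η (a x) • h x ∂μ‖ₑ ≤
      ∫⁻ t, ‖θ t - η t‖ₑ ∂((μ.withDensity fun x => ‖h x‖ₑ).map a) := by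
  have h_meas : Measurable fun t => ‖θ t - η t‖ₑ := (hθ.sub hη).enorm
  rw [← integral_sub (integrable_comp_smul_of_bounded ha hh hθ hθ_bdd)
    (integrable_comp_smul_of_bounded ha hh hη hη_bdd),
    lintegral_map' h_meas.aemeasurable (ha.mono_ac (withDensity_absolutelyContinuous _ _)),
    lintegral_withDensity_eq_lintegral_mul₀ hh.1.enorm
      (g := fun x => ‖θ (a x) - η (a x)‖ₑ) (h_meas.comp_aemeasurable ha)]
  refine (enorm_integral_le_lintegral_enorm _).trans_eq (lintegral_congr fun x => ?_)
  rw [← sub_smul, enorm_smul, mul_comm, Pi.mul_apply]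

theorem integral_comp_smul_eq_of_forall_contDiff [NormedAddCommGroup V] [NormedSpace ℝ V]
    [FiniteDimensional ℝ V] [BorelSpace V] (ha : AEMeasurable a μ) (hb : AEMeasurable b ν)
    (hh : Integrable h μ) (hk : Integrable k ν)
    (h_eq : ∀ η : V → ℝ, ContDiff ℝ ∞ η → HasCompactSupport η →
      ∫ x, η (a x) • h x ∂μ = ∫ y, η (b y) • k y ∂ν)
    (hθ : Measurable θ) (hθ_bdd : ∃ C, ∀ t, |θ t| ≤ C) :
    ∫ x, θ (a x) • h x ∂μ = ∫ y, θ (b y) • k y ∂ν := by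
  let m₁ := (μ.withDensity fun x => ‖h x‖ₑ).map a
  let m₂ := (ν.withDensity fun y => ‖k y‖ₑ).map b
  have : IsFiniteMeasure (μ.withDensity fun x => ‖h x‖ₑ) := isFiniteMeasure_withDensity hh.2.ne
  have : IsFiniteMeasure (ν.withDensity fun y => ‖k y‖ₑ) := isFiniteMeasure_withDensity hk.2.ne
  have hθ_memLp : MemLp θ 1 (m₁ + m₂) := by
    obtain ⟨C, hC⟩ := hθ_bdd
    exact .of_bound hθ.aestronglyMeasurable C (.of_forall hC)
  rw [← sub_eq_zero, ← enorm_eq_zero, ← nonpos_iff_eq_zero]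
  refine ENNReal.le_of_forall_pos_le_add fun ε hε _ => ?_
  obtain ⟨η, hη_supp, hη, h_approx⟩ :=
    hθ_memLp.exist_eLpNorm_sub_le ENNReal.one_ne_top le_rfl (NNReal.coe_pos.2 hε)
  rw [eLpNorm_one_eq_lintegral_enorm, lintegral_add_measure, ENNReal.ofReal_coe_nnreal] at h_approx
  have hη_bdd : ∃ C, ∀ t, |η t| ≤ C := hη_supp.exists_bound_of_continuous hη.continuous
  have hμ_le := enorm_integral_comp_smul_sub_le ha hh hθ hθ_bdd hη.continuous.measurable hη_bdd
  have hν_le := enorm_integral_comp_smul_sub_le hb hk hθ hθ_bdd hη.continuous.measurable hη_bdd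
  rw [h_eq η hη hη_supp] at hμ_le
  calc ‖∫ x, θ (a x) • h x ∂μ - ∫ y, θ (b y) • k y ∂ν‖ₑ
      = ‖(∫ x, θ (a x) • h x ∂μ - ∫ y, η (b y) • k y ∂ν) -
          (∫ y, θ (b y) • k y ∂ν - ∫ y, η (b y) • k y ∂ν)‖ₑ := by rw [sub_sub_sub_cancel_right]
    _ ≤ _ := enorm_sub_le
    _ ≤ 0 + ε := (add_le_add hμ_le hν_le).trans (h_approx.trans_eq (zero_add _).symm)

end Density

section BoundedMultiplier

theorem fderiv_mul_comp_snd_apply {E : Type*} [NormedAddCommGroup E] [NormedSpace ℝ E]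
    {Φ : E × ℝ → ℝ} {η : ℝ → ℝ} {p : E × ℝ} (hΦ : DifferentiableAt ℝ Φ p)
    (hη : DifferentiableAt ℝ η p.2) (e : E) :
    fderiv ℝ (fun p => η p.2 * Φ p) p (e, 0) = η p.2 * fderiv ℝ Φ p (e, 0) := by
  have hη_snd : HasFDerivAt (fun p : E × ℝ => η p.2) _ p := hη.hasFDerivAt.comp p hasFDerivAt_snd
  rw [(hη_snd.fun_mul hΦ.hasFDerivAt).fderiv]
  simp

variable {E : Type*} [NormedAddCommGroup E] [NormedSpace ℝ E] [FiniteDimensional ℝ E]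
  [MeasurableSpace E] [BorelSpace E] {μ : Measure E} [μ.IsAddHaarMeasure] {Ω K : Set E}
  {u g : E → ℝ} {e : E} {Φ : E × ℝ → ℝ} {θ : ℝ → ℝ}

theorem HasWeakLineDerivOn.setIntegral_mul_comp_graph_mul (hug : HasWeakLineDerivOn μ Ω u g e)
    (hΩ : IsOpen Ω) (hu : LocallyIntegrableOn u Ω μ) (hg : LocallyIntegrableOn g Ω μ)
    (hK : IsCompact K) (hKΩ : K ⊆ Ω) (hΦ : ContDiff ℝ 1 Φ) (hΦ_supp : HasCompactSupport Φ)
    (hΦK : tsupport Φ ⊆ K ×ˢ univ) (hθ : Measurable θ) (hθ_bdd : ∃ C, ∀ t, |θ t| ≤ C) :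
    ∫ x in K, θ (u x) * Φ (x, u x) * g x ∂μ =
      -∫ t, θ t * ∫ x in {x | t ≤ u x}, fderiv ℝ Φ (x, t) (e, 0) ∂(μ.restrict K) := by
  have : IsFiniteMeasure (μ.restrict K) := isFiniteMeasure_restrict.2 hK.measure_ne_top
  let S : Set (E × ℝ) := {p | p.2 ≤ u p.1}
  have hu_meas : AEMeasurable u (μ.restrict K) :=
    (hu.integrableOn_compact_subset hKΩ hK).aemeasurable
  have h_left : Integrable (fun x => Φ (x, u x) * g x) (μ.restrict K) := by
    obtain ⟨C, hC⟩ := hΦ_supp.exists_bound_of_continuous hΦ.continuous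
    have hΦ_graph : AEMeasurable (fun x => Φ (x, u x)) (μ.restrict K) :=
      hΦ.continuous.measurable.comp_aemeasurable (aemeasurable_id.prodMk hu_meas)
    exact (hg.integrableOn_compact_subset hKΩ hK).bdd_mul hΦ_graph.aestronglyMeasurable
      (.of_forall fun x => hC (x, u x))
  have h_right : Integrable (fun p => -fderiv ℝ Φ p (e, 0)) ((μ.restrict K).prod volume) :=
    (((hΦ.continuous_fderiv one_ne_zero).clm_apply
      continuous_const).integrable_of_hasCompactSupport (hΦ_supp.fderiv_apply ℝ _)).neg
  have h_smooth (η : ℝ → ℝ) (hη : ContDiff ℝ ∞ η) : ∫ x in K, η (u x) * (Φ (x, u x) * g x) ∂μ =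
      ∫ p in S, η p.2 * -fderiv ℝ Φ p (e, 0) ∂((μ.restrict K).prod volume) := by
    have hη_one : ContDiff ℝ 1 η := hη.of_le (by exact_mod_cast le_top)
    have h_layer := hug.setIntegral_comp_graph_mul hΩ hu hg hK hKΩ (Φ := fun p => η p.2 * Φ p)
      ((hη_one.comp contDiff_snd).mul hΦ) hΦ_supp.mul_left (tsupport_mul_subset_right.trans hΦK)
    have h_fderiv (p : E × ℝ) := fderiv_mul_comp_snd_apply (hΦ.differentiable one_ne_zero p)
      (hη_one.differentiable one_ne_zero p.2) e
    simpa only [h_fderiv, mul_assoc, mul_neg, integral_neg] using h_layer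
  calc ∫ x in K, θ (u x) * Φ (x, u x) * g x ∂μ
      = ∫ p in S, θ p.2 * -fderiv ℝ Φ p (e, 0) ∂((μ.restrict K).prod volume) := by
        simp only [mul_assoc]
        exact integral_comp_smul_eq_of_forall_contDiff hu_meas measurable_snd.aemeasurable h_left
          h_right.restrict (fun η hη _ => h_smooth η hη) hθ hθ_bdd
    _ = -∫ t, θ t * ∫ x in {x | t ≤ u x}, fderiv ℝ Φ (x, t) (e, 0) ∂(μ.restrict K) := by
        have h_fubini := setIntegral_subgraph_symm hu_meas (integrable_comp_smul_of_bounded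
          measurable_snd.aemeasurable h_right hθ hθ_bdd)
        simpa only [smul_eq_mul, mul_neg, integral_neg, integral_const_mul] using h_fubini

theorem stmt7_general (hΩ : IsOpen Ω) (hu : LocallyIntegrableOn u Ω μ)
    (hg : LocallyIntegrableOn g Ω μ) (hug : HasWeakLineDerivOn μ Ω u g e) (hΦ : ContDiff ℝ 1 Φ)
    (hΦ_supp : HasCompactSupport Φ) (hΦΩ : tsupport Φ ⊆ Ω ×ˢ univ) (hθ : Measurable θ)
    (hθ_bdd : ∃ C, ∀ t, |θ t| ≤ C) :
    ∫ x in Ω, θ (u x) * Φ (x, u x) * g x ∂μ =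
      -∫ t, θ t * ∫ x in {x ∈ Ω | t ≤ u x}, fderiv ℝ Φ (x, t) (e, 0) ∂μ := by
  let K : Set E := Prod.fst '' tsupport Φ
  have hK : IsCompact K := hΦ_supp.isCompact.image continuous_fst
  have hKΩ : K ⊆ Ω := by
    rintro _ ⟨p, hp, rfl⟩
    exact (hΦΩ hp).1
  have hΦK : tsupport Φ ⊆ K ×ˢ univ := fun p hp => ⟨mem_image_of_mem _ hp, mem_univ _⟩
  have h_extend {ν : Measure E} {f : E → ℝ} (hf : ∀ x ∉ K, f x = 0) :
      ∫ x in Ω, f x ∂ν = ∫ x in K, f x ∂ν :=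
    setIntegral_eq_of_subset_of_forall_sdiff_eq_zero hΩ.measurableSet hKΩ fun x hx => hf x hx.2
  have h_outside {x : E} (hx : x ∉ K) (t : ℝ) : (x, t) ∉ tsupport Φ := fun h => hx ⟨_, h, rfl⟩
  have h_level (t : ℝ) : ∫ x in {x ∈ Ω | t ≤ u x}, fderiv ℝ Φ (x, t) (e, 0) ∂μ =
      ∫ x in {x | t ≤ u x}, fderiv ℝ Φ (x, t) (e, 0) ∂(μ.restrict K) := by
    rw [← Measure.restrict_comm hK.measurableSet, ← h_extend fun x hx => by
      rw [fderiv_of_notMem_tsupport ℝ (h_outside hx t), zero_apply],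
      Measure.restrict_restrict hΩ.measurableSet]
    rfl
  simp only [h_level]
  rw [h_extend fun x hx => by
    rw [image_eq_zero_of_notMem_tsupport (h_outside hx _), mul_zero, zero_mul]]
  exact hug.setIntegral_mul_comp_graph_mul hΩ hu hg hK hKΩ hΦ hΦ_supp hΦK hθ hθ_bdd

end BoundedMultiplier

/-- For `u ∈ W^{1,1}(Ω)` (with weak directional derivative `g = ∂_e u`
in direction the unit vector `e`, expressed by integration by parts against test
functions), `Φ ∈ C_c^∞(Ω × ℝ)` and bounded measurable `θ`, one has
`∫_Ω θ(u) Φ(x,u) ∂_e u dx = −∫_ℝ θ(t) ∫_{u ≥ t} ∂_e Φ(x,t) dx dt`. -/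
theorem stmt7 {N : ℕ}
    (Ω : Set (EuclideanSpace ℝ (Fin N))) (hΩo : IsOpen Ω) (hΩb : Bornology.IsBounded Ω)
    (u g : EuclideanSpace ℝ (Fin N) → ℝ)
    (e : EuclideanSpace ℝ (Fin N)) (he : ‖e‖ = 1)
    (hu_int : IntegrableOn u Ω) (hg_int : IntegrableOn g Ω)
    (hweak : ∀ φ : EuclideanSpace ℝ (Fin N) → ℝ, ContDiff ℝ (⊤ : ℕ∞) φ → HasCompactSupport φ →
      tsupport φ ⊆ Ω →
      ∫ x in Ω, u x * fderiv ℝ φ x e = -∫ x in Ω, g x * φ x)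
    (Φ : EuclideanSpace ℝ (Fin N) × ℝ → ℝ)
    (hΦ_smooth : ContDiff ℝ (⊤ : ℕ∞) Φ) (hΦ_supp : HasCompactSupport Φ)
    (hΦ_in : tsupport Φ ⊆ Ω ×ˢ (univ : Set ℝ))
    (θ : ℝ → ℝ) (hθm : Measurable θ) (hθb : ∃ K, ∀ t, |θ t| ≤ K) :
    ∫ x in Ω, θ (u x) * Φ (x, u x) * g x
      = -∫ t : ℝ, θ t * ∫ x in {x ∈ Ω | t ≤ u x}, fderiv ℝ Φ (x, t) (e, 0) :=
  stmt7_general hΩo hu_int.locallyIntegrableOn hg_int.locallyIntegrableOn hweak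
    (hΦ_smooth.of_le (by exact_mod_cast le_top)) hΦ_supp hΦ_in hθm hθb
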